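/- Let t ≥ 6 and ε ∈ (0, 1] be real, let pc > 1, and let θ be real with |θ| ≤ 1/2. Set a = √(8t/π), α_E = a·(pc + 1)/(2√pc), and M = ((ε²t)^{1/6}/√(2π))·(2α_E/a − a/(2α_E)). If α_E ≤ (ε·t²)^{1/3}/(√π·log t), then 2|θ|·(pc − 1)/M ≤ √π·2|θ|/log t; in particular 2|θ|·(pc − 1)/M < 1. -/

import Mathlib

open Real

/-!
Write `a = √(8t/π)`, `K = (ε²t)^{1/6}` and `u = 2α/a`. Since `(εt²)^{1/3} = K√t`, the cut-off on the
pivot `α` says exactly that `u ≤ K / (√2 log t)`, while `√π M = (K/√2)(u - 1/u)`. Hence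
`√π M ≥ (u² - 1) log t`. At the pivot of `pc` one has `u² = pc + 2 + 1/pc`, so `u² - 1`
dominates `|pc - 1|`, and the amplitude factor is at most `2√π|θ| / log t`.
-/

/-- The scale `a = √(8t/π)` in which the paper measures pivots. -/
noncomputable def pivotScale (t : ℝ) : ℝ :=
  √(8 * t / π)

/-- The pivot `α_E` corresponding to the portcullis value `pc`. -/
noncomputable def pivot (t pc : ℝ) : ℝ :=
  pivotScale t * (pc + 1) / (2 * √pc)

/-- The collection size `M_t(α)` prescribed by eq. (83b) of the paper at tolerance `ε`. -/
noncomputable def collectionSize (t ε α : ℝ) : ℝ :=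
  (ε ^ 2 * t) ^ ((1 : ℝ) / 6) / √(2 * π) * (2 * α / pivotScale t - pivotScale t / (2 * α))

/-- The cut-off `α_E^c` up to which pivots are considered. -/
noncomputable def pivotCutoff (t ε : ℝ) : ℝ :=
  (ε * t ^ 2) ^ ((1 : ℝ) / 3) / (√π * log t)

section

variable {t ε α pc θ : ℝ}

theorem pivotScale_pos (ht : 0 < t) : 0 < pivotScale t :=
  sqrt_pos.2 (by positivity)

theorem pivotScale_div_two (ht : 0 ≤ t) : pivotScale t / 2 = √2 * √t / √π := by
  have h : 8 * t / π = 2 ^ 2 * (2 * t / π) := by ring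
  rw [pivotScale, h, sqrt_mul (by norm_num), sqrt_sq (by norm_num), sqrt_div (by positivity),
    sqrt_mul (by norm_num), mul_div_cancel_left₀ _ two_ne_zero]

theorem mul_sq_rpow_one_third (hε : 0 ≤ ε) (ht : 0 ≤ t) :
    (ε * t ^ 2) ^ ((1 : ℝ) / 3) = (ε ^ 2 * t) ^ ((1 : ℝ) / 6) * √t :=
  calc (ε * t ^ 2) ^ ((1 : ℝ) / 3)
    _ = ((ε * t ^ 2) ^ 2) ^ ((1 : ℝ) / 6) := by
      rw [← rpow_natCast_mul (by positivity)]; norm_num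
    _ = (ε ^ 2 * t) ^ ((1 : ℝ) / 6) * (t ^ 3) ^ ((1 : ℝ) / 6) := by
      rw [← mul_rpow (by positivity) (by positivity)]; ring_nf
    _ = (ε ^ 2 * t) ^ ((1 : ℝ) / 6) * √t := by
      rw [← rpow_natCast_mul ht, sqrt_eq_rpow]; norm_num

theorem pivotCutoff_eq (hε : 0 ≤ ε) (ht : 0 ≤ t) :
    pivotCutoff t ε =
      pivotScale t / 2 * ((ε ^ 2 * t) ^ ((1 : ℝ) / 6) / √2 / log t) := by
  rw [pivotCutoff, mul_sq_rpow_one_third hε ht, pivotScale_div_two ht]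
  field_simp

theorem two_mul_div_pivotScale_mul_log_le (ht : 1 < t) (hε : 0 ≤ ε) (hα : α ≤ pivotCutoff t ε) :
    2 * α / pivotScale t * log t ≤ (ε ^ 2 * t) ^ ((1 : ℝ) / 6) / √2 := by
  have ht₀ : 0 < t := one_pos.trans ht
  have ha : 0 < pivotScale t := pivotScale_pos ht₀
  rw [pivotCutoff_eq hε ht₀.le, ← div_le_iff₀' (half_pos ha), le_div_iff₀ (log_pos ht)] at hα
  rwa [show 2 * α / pivotScale t = α / (pivotScale t / 2) by field_simp]

theorem sq_sub_one_mul_log_le_sqrt_pi_mul_collectionSize (ht : 1 < t) (hε : 0 ≤ ε)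
    (hα : pivotScale t / 2 ≤ α) (hcut : α ≤ pivotCutoff t ε) :
    ((2 * α / pivotScale t) ^ 2 - 1) * log t ≤ √π * collectionSize t ε α := by
  have ha : 0 < pivotScale t := pivotScale_pos (one_pos.trans ht)
  have hα₀ : 0 < α := (half_pos ha).trans_le hα
  have hdiff : 0 ≤ 2 * α / pivotScale t - pivotScale t / (2 * α) := by
    have hle : pivotScale t ≤ 2 * α := by linarith
    exact sub_nonneg.2 <| (div_le_one_of_le₀ hle (by positivity)).trans ((one_le_div ha).2 hle)
  calc ((2 * α / pivotScale t) ^ 2 - 1) * log t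
    _ = 2 * α / pivotScale t * log t * (2 * α / pivotScale t - pivotScale t / (2 * α)) := by
      field_simp
    _ ≤ (ε ^ 2 * t) ^ ((1 : ℝ) / 6) / √2 * (2 * α / pivotScale t - pivotScale t / (2 * α)) := by
      gcongr
      exact two_mul_div_pivotScale_mul_log_le ht hε hcut
    _ = √π * collectionSize t ε α := by
      rw [collectionSize, sqrt_mul zero_le_two]
      field_simp

theorem two_mul_pivot_div_pivotScale_sq (ht : 0 < t) (hpc : 0 < pc) :
    (2 * pivot t pc / pivotScale t) ^ 2 = pc + 2 + 1 / pc := by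
  have ha : pivotScale t ≠ 0 := (pivotScale_pos ht).ne'
  have hu : 2 * pivot t pc / pivotScale t = (pc + 1) / √pc := by
    rw [pivot]
    field_simp
  rw [hu, div_pow, sq_sqrt hpc.le]
  field_simp
  ring

theorem pivotScale_le_pivot (ht : 0 < t) (hpc : 0 < pc) : pivotScale t ≤ pivot t pc := by
  have ham_gm : 2 * √pc ≤ pc + 1 := by
    nlinarith [sq_nonneg (√pc - 1), sq_sqrt hpc.le]
  rw [pivot, le_div_iff₀ (by positivity)]
  exact mul_le_mul_of_nonneg_left ham_gm (pivotScale_pos ht).le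

theorem abs_sub_one_div_collectionSize_pivot_le (ht : 1 < t) (hε : 0 ≤ ε) (hpc : 0 < pc)
    (hcut : pivot t pc ≤ pivotCutoff t ε) :
    |pc - 1| / collectionSize t ε (pivot t pc) ≤ √π / log t := by
  have ht₀ : 0 < t := one_pos.trans ht
  have hL : 0 < log t := log_pos ht
  have hα : pivotScale t / 2 ≤ pivot t pc :=
    (half_le_self (pivotScale_pos ht₀).le).trans (pivotScale_le_pivot ht₀ hpc)
  have hM := sq_sub_one_mul_log_le_sqrt_pi_mul_collectionSize ht hε hα hcut
  rw [two_mul_pivot_div_pivotScale_sq ht₀ hpc] at hM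
  have hinv : 0 < 1 / pc := one_div_pos.2 hpc
  have hM₀ : 0 < collectionSize t ε (pivot t pc) :=
    pos_of_mul_pos_right ((mul_pos (by linarith) hL).trans_le hM) (sqrt_nonneg π)
  rw [div_le_div_iff₀ hM₀ hL]
  refine le_trans ?_ hM
  gcongr
  exact abs_le.2 ⟨by linarith, by linarith⟩

theorem exp_sqrt_pi_lt_six : exp √π < 6 := by
  have hsqrt : √π < 16 / 9 :=
    (sqrt_lt' (by norm_num)).2 (pi_lt_d2.trans (by norm_num))
  refine lt_of_pow_lt_pow_left₀ 9 (by norm_num) ?_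
  calc exp √π ^ 9
    _ = exp (9 * √π) := by rw [← exp_nat_mul]; norm_num
    _ < exp 16 := exp_lt_exp.2 (by linarith)
    _ = exp 1 ^ 16 := by rw [← exp_nat_mul]; norm_num
    _ < 2.7182818286 ^ 16 := by gcongr; exact exp_one_lt_d9
    _ < 6 ^ 9 := by norm_num

theorem stmt19_general (ht : exp √π < t) (hε : 0 ≤ ε) (hpc : 0 < pc) (hθ : |θ| ≤ 1 / 2)
    (hcut : pivot t pc ≤ pivotCutoff t ε) :
    2 * |θ| * |pc - 1| / collectionSize t ε (pivot t pc) ≤ √π * (2 * |θ|) / log t ∧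
      2 * |θ| * |pc - 1| / collectionSize t ε (pivot t pc) < 1 := by
  have ht₁ : 1 < t := (one_le_exp (sqrt_nonneg π)).trans_lt ht
  have hlog : √π < log t := (lt_log_iff_exp_lt (one_pos.trans ht₁)).2 ht
  have hle : 2 * |θ| * |pc - 1| / collectionSize t ε (pivot t pc) ≤ √π * (2 * |θ|) / log t := by
    rw [mul_div_assoc, mul_comm √π, mul_div_assoc]
    exact mul_le_mul_of_nonneg_left
      (abs_sub_one_div_collectionSize_pivot_le ht₁ hε hpc hcut) (by positivity)
  refine ⟨hle, hle.trans_lt ((div_lt_one (log_pos ht₁)).2 ?_)⟩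
  exact (mul_le_of_le_one_right (sqrt_nonneg π) (by linarith)).trans_lt hlog

end

/-- Eq. (126) of the paper: with the collection size `M = M_t(α_E)` prescribed
by eq. (83b) and the cut-off `α_E ≤ (ε·t²)^{1/3}/(√π·log t)`, the extra
amplitude factor `2|θ|·(pc − 1)/M` never exceeds `√π·2|θ|/log t < 1`. -/
theorem stmt19 (t ε pc θ : ℝ) (ht : 6 ≤ t) (hε : ε ∈ Set.Ioc (0 : ℝ) 1)
    (hpc : 1 < pc) (hθ : |θ| ≤ 1/2)
    (a αE M : ℝ)
    (ha : a = Real.sqrt (8 * t / π))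
    (hαE : αE = a * (pc + 1) / (2 * Real.sqrt pc))
    (hM : M = (ε ^ 2 * t) ^ ((1 : ℝ) / 6) / Real.sqrt (2 * π)
        * (2 * αE / a - a / (2 * αE)))
    (hcut : αE ≤ (ε * t ^ 2) ^ ((1 : ℝ) / 3) / (Real.sqrt π * Real.log t)) :
    2 * |θ| * (pc - 1) / M ≤ Real.sqrt π * (2 * |θ|) / Real.log t ∧
      2 * |θ| * (pc - 1) / M < 1 := by
  subst hM hαE ha
  exact abs_of_pos (sub_pos.2 hpc) ▸
    stmt19_general (exp_sqrt_pi_lt_six.trans_le ht) hε.1.le (one_pos.trans hpc) hθ hcut
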